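/- arXiv:1004.2079 — 3 statements merged into one kernel-verified Lean document; each statement's English description precedes it below -/
import Mathlib

section
/- The update operator T of the natural bargaining dynamics is nonexpansive in the sup norm: for any exchange network with edge weights bounded by W, and any two message vectors α, β ∈ [0,W]^{2|E|}, one has ‖Tα − Tβ‖_∞ ≤ ‖α − β‖_∞, where ‖·‖_∞ is the maximum over directed edges of the absolute coordinate difference. -/
namespace EN

open Finset

variable {V : Type*}

/-- The nonnegative part `(x)₊ = max (x, 0)`. -/
noncomputable def pos (x : ℝ) : ℝ := max x 0

variable [Fintype V] [DecidableEq V]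

/-- The maximum of `f` over a finite set of vertices (`0` over the empty set). -/
noncomputable def fmax (s : Finset V) (f : V → ℝ) : ℝ := ⨆ k ∈ s, f k

/-- The offer from `i` to `j` given messages `α` and weights `w`:
`m_{i→j} = (w_{ij} − α_{i\j})₊ − (1/2) (w_{ij} − α_{i\j} − α_{j\i})₊`. -/
noncomputable def offer (w α : V → V → ℝ) (i j : V) : ℝ :=
  pos (w i j - α i j) - (1 / 2) * pos (w i j - α i j - α j i)

/-- The update operator `T` of the natural dynamics:
`(Tα)_{i\j} = max_{k ∈ ∂i \ j} m_{k→i}`. -/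
noncomputable def upd (G : SimpleGraph V) [DecidableRel G.Adj] (w α : V → V → ℝ)
    (i j : V) : ℝ :=
  fmax ((G.neighborFinset i).erase j) fun k => offer w α k i

/-- The earnings estimate `γ_i = max_{k ∈ ∂i} m_{k→i}`. -/
noncomputable def earn (G : SimpleGraph V) [DecidableRel G.Adj] (w α : V → V → ℝ)
    (i : V) : ℝ :=
  fmax (G.neighborFinset i) fun k => offer w α k i

/-- Exchange network weights: symmetric and positive on every edge. -/
def GoodW (G : SimpleGraph V) (w : V → V → ℝ) : Prop :=
  (∀ i j, w i j = w j i) ∧ ∀ i j, G.Adj i j → 0 < w i j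

/-- A valid message vector: nonnegative on all directed edges. -/
def ValidMsg (G : SimpleGraph V) (α : V → V → ℝ) : Prop :=
  ∀ i j, G.Adj i j → 0 ≤ α i j

/-- Fixed point of the natural-dynamics update operator. -/
def IsFixedPt (G : SimpleGraph V) [DecidableRel G.Adj] (w α : V → V → ℝ) : Prop :=
  ∀ i j, G.Adj i j → upd G w α i j = α i j

/-- `ε`-fixed point. -/
def IsEpsFixedPt (G : SimpleGraph V) [DecidableRel G.Adj] (w α : V → V → ℝ) (ε : ℝ) : Prop :=
  ∀ i j, G.Adj i j → |α i j - upd G w α i j| ≤ ε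

/-- The natural dynamics with damping factor `κ`: `α^{t+1} = (1−κ) α^t + κ T α^t`. -/
noncomputable def dyn (G : SimpleGraph V) [DecidableRel G.Adj] (w : V → V → ℝ) (κ : ℝ)
    (α0 : V → V → ℝ) : ℕ → V → V → ℝ
  | 0 => α0
  | t + 1 => fun i j =>
      (1 - κ) * dyn G w κ α0 t i j + κ * upd G w (dyn G w κ α0 t) i j

/-- Sup norm over directed edges. -/
noncomputable def msgSup (G : SimpleGraph V) [DecidableRel G.Adj] (f : V → V → ℝ) : ℝ :=
  ⨆ p : V × V, if G.Adj p.1 p.2 then |f p.1 p.2| else 0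

/-- `M` is a matching of `G`: a symmetric subrelation of adjacency pairing each node
with at most one partner. -/
structure IsMatching (G : SimpleGraph V) (M : V → V → Prop) : Prop where
  subset : ∀ i j, M i j → G.Adj i j
  symm : ∀ i j, M i j → M j i
  unique : ∀ i j k, M i j → M i k → j = k

/-- `(M, γ)` is a trade outcome. -/
def IsOutcome (G : SimpleGraph V) (w : V → V → ℝ) (M : V → V → Prop) (γ : V → ℝ) : Prop :=
  IsMatching G M ∧ (∀ i, 0 ≤ γ i) ∧ (∀ i j, M i j → γ i + γ j = w i j) ∧
    ∀ i, (∀ j, ¬M i j) → γ i = 0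

/-- Stability of an outcome. -/
def Stable (G : SimpleGraph V) (w : V → V → ℝ) (M : V → V → Prop) (γ : V → ℝ) : Prop :=
  ∀ i j, G.Adj i j → ¬M i j → w i j ≤ γ i + γ j

/-- The best alternative of `i` excluding `j`: `max_{k ∈ ∂i \ j} (w_{ik} − γ_k)₊`. -/
noncomputable def bestAlt (G : SimpleGraph V) [DecidableRel G.Adj] (w : V → V → ℝ)
    (γ : V → ℝ) (i j : V) : ℝ :=
  fmax ((G.neighborFinset i).erase j) fun k => pos (w i k - γ k)

/-- Balance of an outcome. -/
def Balanced (G : SimpleGraph V) [DecidableRel G.Adj] (w : V → V → ℝ) (M : V → V → Prop)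
    (γ : V → ℝ) : Prop :=
  ∀ i j, M i j → γ i - bestAlt G w γ i j = γ j - bestAlt G w γ j i

/-- Nash bargaining solution: a stable and balanced trade outcome. -/
def IsNBSolution (G : SimpleGraph V) [DecidableRel G.Adj] (w : V → V → ℝ)
    (M : V → V → Prop) (γ : V → ℝ) : Prop :=
  IsOutcome G w M γ ∧ Stable G w M γ ∧ Balanced G w M γ

/-- `ε`-balance. -/
def EpsBalanced (G : SimpleGraph V) [DecidableRel G.Adj] (w : V → V → ℝ)
    (M : V → V → Prop) (γ : V → ℝ) (ε : ℝ) : Prop :=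
  ∀ i j, M i j → |(γ i - bestAlt G w γ i j) - (γ j - bestAlt G w γ j i)| ≤ ε

/-- `ε`-Nash bargaining solution. -/
def IsEpsNB (G : SimpleGraph V) [DecidableRel G.Adj] (w : V → V → ℝ)
    (M : V → V → Prop) (γ : V → ℝ) (ε : ℝ) : Prop :=
  IsOutcome G w M γ ∧ Stable G w M γ ∧ EpsBalanced G w M γ ε

/-- Feasible point of the LP relaxation of maximum weight matching. -/
def LPFeasible (G : SimpleGraph V) [DecidableRel G.Adj] (x : V → V → ℝ) : Prop :=
  (∀ i j, x i j = x j i) ∧ (∀ i j, 0 ≤ x i j) ∧ (∀ i j, ¬G.Adj i j → x i j = 0) ∧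
    ∀ i, ∑ j ∈ G.neighborFinset i, x i j ≤ 1

/-- LP objective `Σ_{(i,j)∈E} w_{ij} x_{ij}` (each undirected edge counted once). -/
noncomputable def LPval (G : SimpleGraph V) [DecidableRel G.Adj] (w x : V → V → ℝ) : ℝ :=
  (1 / 2) * ∑ i, ∑ j ∈ G.neighborFinset i, w i j * x i j

/-- Optimal point of the LP relaxation of maximum weight matching. -/
def LPOptimal (G : SimpleGraph V) [DecidableRel G.Adj] (w x : V → V → ℝ) : Prop :=
  LPFeasible G x ∧ ∀ y, LPFeasible G y → LPval G w y ≤ LPval G w x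

def Integral (x : V → V → ℝ) : Prop := ∀ i j, x i j = 0 ∨ x i j = 1

def HalfIntegral (x : V → V → ℝ) : Prop := ∀ i j, x i j = 0 ∨ x i j = 1 / 2 ∨ x i j = 1

open Classical in
/-- The LP point associated to a matching. -/
noncomputable def mInd (M : V → V → Prop) (i j : V) : ℝ := if M i j then 1 else 0

/-- The state with offers `m` induces the matching `M`: every node receiving a positive
offer is matched and receives its unique best offer from its partner, and every node
with zero earnings is unmatched. -/
def Induces (G : SimpleGraph V) [DecidableRel G.Adj] (m : V → V → ℝ)
    (M : V → V → Prop) : Prop :=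
  IsMatching G M ∧
    (∀ i, (∃ k, G.Adj i k ∧ 0 < m k i) →
      ∃ j, M i j ∧ ∀ k, G.Adj i k → k ≠ j → m k i < m j i) ∧
    ∀ i, (fmax (G.neighborFinset i) fun k => m k i) = 0 → ∀ j, ¬M i j

/-- Feasibility for the dual LP. -/
def DualFeasible (G : SimpleGraph V) (w : V → V → ℝ) (y : V → ℝ) : Prop :=
  (∀ i, 0 ≤ y i) ∧ ∀ i j, G.Adj i j → w i j ≤ y i + y j

/-- Optimality for the dual LP. -/
def DualOptimal (G : SimpleGraph V) (w : V → V → ℝ) (y : V → ℝ) : Prop :=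
  DualFeasible G w y ∧ ∀ z, DualFeasible G w z → ∑ i, y i ≤ ∑ i, z i

/-- The unmatched balance property at every edge. -/
def UnmatchedBalance (G : SimpleGraph V) [DecidableRel G.Adj] (w : V → V → ℝ)
    (y : V → ℝ) : Prop :=
  ∀ i j, G.Adj i j → y i - bestAlt G w y i j = y j - bestAlt G w y j i

/-! ### Unequal division -/

/-- Valid split fractions: `r_{ij} ∈ (0,1)` with `r_{ij} + r_{ji} = 1` on every edge. -/
def GoodR (G : SimpleGraph V) (r : V → V → ℝ) : Prop :=
  ∀ i j, G.Adj i j → 0 < r i j ∧ r i j < 1 ∧ r i j + r j i = 1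

/-- The UD offer from `i` to `j`. -/
noncomputable def offerUD (w r α : V → V → ℝ) (i j : V) : ℝ :=
  pos (w i j - α i j) - r i j * pos (w i j - α i j - α j i)

/-- The UD update operator. -/
noncomputable def updUD (G : SimpleGraph V) [DecidableRel G.Adj] (w r α : V → V → ℝ)
    (i j : V) : ℝ :=
  fmax ((G.neighborFinset i).erase j) fun k => offerUD w r α k i

/-- The UD earnings estimate. -/
noncomputable def earnUD (G : SimpleGraph V) [DecidableRel G.Adj] (w r α : V → V → ℝ)
    (i : V) : ℝ :=
  fmax (G.neighborFinset i) fun k => offerUD w r α k i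

/-- Fixed point of the UD update operator. -/
def IsFixedPtUD (G : SimpleGraph V) [DecidableRel G.Adj] (w r α : V → V → ℝ) : Prop :=
  ∀ i j, G.Adj i j → updUD G w r α i j = α i j

/-- Correct division. -/
def CorrectDiv (G : SimpleGraph V) [DecidableRel G.Adj] (w r : V → V → ℝ)
    (M : V → V → Prop) (γ : V → ℝ) : Prop :=
  ∀ i j, M i j →
    (1 / r i j) * (γ i - bestAlt G w γ i j) = (1 / r j i) * (γ j - bestAlt G w γ j i)

/-- UD solution: a stable trade outcome satisfying correct division. -/
def IsUDSolution (G : SimpleGraph V) [DecidableRel G.Adj] (w r : V → V → ℝ)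
    (M : V → V → Prop) (γ : V → ℝ) : Prop :=
  IsOutcome G w M γ ∧ Stable G w M γ ∧ CorrectDiv G w r M γ

/-- Edge surplus. -/
noncomputable def surp (G : SimpleGraph V) [DecidableRel G.Adj] (w : V → V → ℝ)
    (γ : V → ℝ) (i j : V) : ℝ :=
  w i j - bestAlt G w γ i j - bestAlt G w γ j i

open Classical in
/-- The rebalanced allocation `γ^reb`. -/
noncomputable def reb (G : SimpleGraph V) [DecidableRel G.Adj] (w r : V → V → ℝ)
    (M : V → V → Prop) (γ : V → ℝ) (i : V) : ℝ :=
  if h : ∃ j, M i j then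
    bestAlt G w γ i h.choose + r i h.choose * surp G w γ i h.choose
  else 0

/-- The Edge Rebalancing iteration `γ^{t+1} = κ γ^reb(γ^t) + (1−κ) γ^t`. -/
noncomputable def rebIter (G : SimpleGraph V) [DecidableRel G.Adj] (w r : V → V → ℝ)
    (M : V → V → Prop) (κ : ℝ) (γ0 : V → ℝ) : ℕ → V → ℝ
  | 0 => γ0
  | t + 1 => fun i =>
      κ * reb G w r M (rebIter G w r M κ γ0 t) i + (1 - κ) * rebIter G w r M κ γ0 t i

/-!
Expanding the positive parts turns the offer from `i` to `j` into
`(|w_{ij} − α_{i∖j}| + min (w_{ij} − α_{i∖j}, α_{j∖i})) / 2`.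
Both `|·|` and `min` are nonexpansive in the sup norm, hence so is their average, and taking a
maximum of offers cannot increase a uniform bound on their differences.
-/

theorem pos_eq_half_add_abs (x : ℝ) : pos x = (x + |x|) / 2 := by
  rw [pos, max_comm, sup_eq_half_smul_add_add_abs_sub' ℝ, zero_add, sub_zero, smul_eq_mul,
    div_eq_inv_mul]

theorem pos_sub_eq_sub_min (x y : ℝ) : pos (x - y) = x - min x y := by
  rw [pos, ← sub_self x, max_sub_sub_left, min_comm]

theorem offer_eq_half_abs_add_min {V : Type*} (w α : V → V → ℝ) (i j : V) :
    offer w α i j = (|w i j - α i j| + min (w i j - α i j) (α j i)) / 2 := by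
  rw [offer, pos_eq_half_add_abs, pos_sub_eq_sub_min]
  ring

theorem abs_offer_sub_offer_le {V : Type*} (w α β : V → V → ℝ) (i j : V) :
    |offer w α i j - offer w β i j| ≤ max |α i j - β i j| |α j i - β j i| := by
  set a := w i j - α i j with ha
  set b := w i j - β i j with hb
  have hab : |a - b| = |α i j - β i j| := by
    rw [ha, hb, sub_sub_sub_cancel_left, abs_sub_comm]
  have h_abs : |(|a| - |b|)| ≤ max |α i j - β i j| |α j i - β j i| :=
    ((abs_abs_sub_abs_le a b).trans_eq hab).trans (le_max_left _ _)
  have h_min : |min a (α j i) - min b (β j i)| ≤ max |α i j - β i j| |α j i - β j i| :=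
    hab ▸ abs_min_sub_min_le_max a (α j i) b (β j i)
  calc |offer w α i j - offer w β i j|
      = |(|a| - |b|) + (min a (α j i) - min b (β j i))| / 2 := by
        rw [offer_eq_half_abs_add_min, offer_eq_half_abs_add_min, ← sub_div, add_sub_add_comm,
          abs_div, abs_two]
    _ ≤ (|(|a| - |b|)| + |min a (α j i) - min b (β j i)|) / 2 := by
        gcongr
        exact abs_add_le _ _
    _ ≤ max |α i j - β i j| |α j i - β j i| := by linarith

theorem bddAbove_range_of_le_add {ι : Sort*} {f g : ι → ℝ} {D : ℝ} (h : ∀ i, f i ≤ g i + D)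
    (hg : BddAbove (Set.range g)) : BddAbove (Set.range f) := by
  obtain ⟨B, hB⟩ := hg
  refine ⟨B + D, Set.forall_mem_range.2 fun i => (h i).trans ?_⟩
  gcongr
  exact hB (Set.mem_range_self i)

theorem iSup_le_iSup_add {ι : Sort*} {f g : ι → ℝ} {D : ℝ} (hD : 0 ≤ D)
    (h : ∀ i, f i ≤ g i + D) (hg : BddAbove (Set.range g)) : ⨆ i, f i ≤ (⨆ i, g i) + D := by
  cases isEmpty_or_nonempty ι
  · simpa only [Real.iSup_of_isEmpty, zero_add] using hD
  · refine ciSup_le fun i => (h i).trans ?_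
    gcongr
    exact le_ciSup hg i

theorem abs_iSup_sub_iSup_le {ι : Sort*} {f g : ι → ℝ} {D : ℝ} (hD : 0 ≤ D)
    (h : ∀ i, |f i - g i| ≤ D) : |(⨆ i, f i) - ⨆ i, g i| ≤ D := by
  have hfg (i : ι) : f i ≤ g i + D := sub_le_iff_le_add'.1 (abs_sub_le_iff.1 (h i)).1
  have hgf (i : ι) : g i ≤ f i + D := sub_le_iff_le_add'.1 (abs_sub_le_iff.1 (h i)).2
  by_cases hg : BddAbove (Set.range g)
  · have hf : BddAbove (Set.range f) := bddAbove_range_of_le_add hfg hg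
    exact abs_sub_le_iff.2 ⟨sub_le_iff_le_add'.2 (iSup_le_iSup_add hD hfg hg),
      sub_le_iff_le_add'.2 (iSup_le_iSup_add hD hgf hf)⟩
  · -- The families are unbounded together, and an unbounded real supremum is `0` by convention.
    have hf : ¬BddAbove (Set.range f) := mt (bddAbove_range_of_le_add hgf) hg
    rwa [Real.iSup_of_not_bddAbove hf, Real.iSup_of_not_bddAbove hg, sub_zero, abs_zero]

theorem abs_fmax_sub_fmax_le {V : Type*} {s : Finset V} {f g : V → ℝ} {D : ℝ} (hD : 0 ≤ D)
    (h : ∀ k ∈ s, |f k - g k| ≤ D) : |fmax s f - fmax s g| ≤ D :=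
  abs_iSup_sub_iSup_le hD fun k => abs_iSup_sub_iSup_le hD (h k)

section MsgSup

variable {V : Type*} {G : SimpleGraph V} [DecidableRel G.Adj]

theorem msgSup_nonneg (f : V → V → ℝ) : 0 ≤ msgSup G f :=
  Real.iSup_nonneg fun _ => ite_nonneg (abs_nonneg _) le_rfl

theorem abs_le_msgSup [Finite V] (f : V → V → ℝ) {i j : V} (hij : G.Adj i j) :
    |f i j| ≤ msgSup G f :=
  le_ciSup_of_le (Set.finite_range _).bddAbove (i, j) (if_pos hij).ge

theorem msgSup_le {f : V → V → ℝ} {D : ℝ} (hD : 0 ≤ D) (h : ∀ i j, G.Adj i j → |f i j| ≤ D) :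
    msgSup G f ≤ D := by
  refine Real.iSup_le (fun p => ?_) hD
  split_ifs with hp
  · exact h p.1 p.2 hp
  · exact hD

end MsgSup

theorem update_nonexpansive_general
    {V : Type*} [Fintype V] [DecidableEq V] (G : SimpleGraph V) [DecidableRel G.Adj]
    (w α β : V → V → ℝ) :
    msgSup G (fun i j => upd G w α i j - upd G w β i j) ≤
      msgSup G (fun i j => α i j - β i j) := by
  refine msgSup_le (msgSup_nonneg _) fun i j _ =>
    abs_fmax_sub_fmax_le (msgSup_nonneg _) fun k hk => ?_
  have hik : G.Adj i k := (G.mem_neighborFinset i k).1 (mem_of_mem_erase hk)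
  calc |offer w α k i - offer w β k i|
      ≤ max |α k i - β k i| |α i k - β i k| := abs_offer_sub_offer_le w α β k i
    _ ≤ msgSup G (fun i j => α i j - β i j) :=
        max_le (abs_le_msgSup (fun i j => α i j - β i j) hik.symm)
          (abs_le_msgSup (fun i j => α i j - β i j) hik)

/-- The update operator `T` of the natural bargaining dynamics is
nonexpansive in the sup norm over directed edges. -/
theorem update_nonexpansive
    {V : Type*} [Fintype V] [DecidableEq V] (G : SimpleGraph V) [DecidableRel G.Adj]
    (w : V → V → ℝ) (hw : GoodW G w) (W : ℝ)
    (hwW : ∀ i j, G.Adj i j → w i j ≤ W)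
    (α β : V → V → ℝ)
    (hα : ∀ i j, G.Adj i j → α i j ∈ Set.Icc (0 : ℝ) W)
    (hβ : ∀ i j, G.Adj i j → β i j ∈ Set.Icc (0 : ℝ) W) :
    msgSup G (fun i j => upd G w α i j - upd G w β i j) ≤
      msgSup G (fun i j => α i j - β i j) :=
  update_nonexpansive_general G w α β

end EN
end

section
/- For any exchange network and any damping factor κ∈(0,1), the natural dynamics α^{t+1} = (1−κ)α^t + κTα^t has at least one fixed point (a message vector α with Tα = α); moreover, for any initial condition α^0 ∈ [0,W]^{2|E|}, where W is the maximum edge weight, the sequence α^t converges to a fixed point of T. -/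
namespace EN

open Finset

variable {V : Type*}

variable [Fintype V] [DecidableEq V]

/-!
Each offer is a piecewise linear function of two messages with gradient of `ℓ¹`-norm at most one,
and a maximum of nonexpansive functions is nonexpansive, so `T` is nonexpansive for the sup norm.
The natural dynamics is therefore a Krasnoselskii–Mann iteration, and it converges as soon as its
orbit stays in a compact set. Indeed, its step lengths decrease to a limit, so every step of the
orbit of a cluster point has that limit as its length. If this common length were positive, the
Goebel–Kirk inequality would make the orbit of the cluster point unbounded; so the cluster point is
fixed, and the distance of the iterates to it decreases to zero. Started from zero, the iteration
stays in a box, which yields a nonnegative fixed point; any other orbit then stays in a ball around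
that fixed point.
-/

open Filter Topology

section Nonexpansive

variable {X : Type*} [PseudoMetricSpace X] {S : X → X} {x p : X} {φ : ℕ → ℕ}

theorem antitone_dist_iterate_succ (hS : LipschitzWith 1 S) (x : X) :
    Antitone fun n => dist (S^[n] x) (S^[n + 1] x) := by
  refine antitone_nat_of_succ_le fun n => ?_
  simpa only [Function.iterate_succ_apply', NNReal.coe_one, one_mul] using
    hS.dist_le_mul (S^[n] x) (S^[n + 1] x)

theorem antitone_dist_iterate_of_isFixedPt (hS : LipschitzWith 1 S)
    (hp : Function.IsFixedPt S p) (x : X) : Antitone fun n => dist (S^[n] x) p := by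
  refine antitone_nat_of_succ_le fun n => ?_
  simpa only [Function.iterate_succ_apply', hp.eq, NNReal.coe_one, one_mul] using
    hS.dist_le_mul (S^[n] x) p

theorem tendsto_iterate_of_isFixedPt_of_tendsto_subseq (hS : LipschitzWith 1 S)
    (hp : Function.IsFixedPt S p) (hφ : Tendsto φ atTop atTop)
    (hlim : Tendsto (fun k => S^[φ k] x) atTop (𝓝 p)) :
    Tendsto (fun n => S^[n] x) atTop (𝓝 p) := by
  rw [tendsto_iff_dist_tendsto_zero] at hlim ⊢
  exact (tendsto_iff_tendsto_subseq_of_antitone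
    (antitone_dist_iterate_of_isFixedPt hS hp x) hφ).2 hlim

theorem tendsto_iterate_add_of_tendsto_subseq (hS : Continuous S)
    (hlim : Tendsto (fun k => S^[φ k] x) atTop (𝓝 p)) (m : ℕ) :
    Tendsto (fun k => S^[φ k + m] x) atTop (𝓝 (S^[m] p)) := by
  simpa only [Function.comp_def, ← Function.iterate_add_apply, add_comm m] using
    ((hS.iterate m).tendsto p).comp hlim

theorem dist_iterate_succ_eq_of_tendsto_subseq (hS : LipschitzWith 1 S)
    (hφ : Tendsto φ atTop atTop) (hlim : Tendsto (fun k => S^[φ k] x) atTop (𝓝 p)) (m : ℕ) :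
    dist (S^[m] p) (S^[m + 1] p) = dist p (S p) := by
  obtain ⟨L, hL⟩ : ∃ L, Tendsto (fun n => dist (S^[n] x) (S^[n + 1] x)) atTop (𝓝 L) :=
    ⟨_, tendsto_atTop_ciInf (antitone_dist_iterate_succ hS x)
      ⟨0, Set.forall_mem_range.2 fun _ => dist_nonneg⟩⟩
  have step_eq (m : ℕ) : dist (S^[m] p) (S^[m + 1] p) = L :=
    tendsto_nhds_unique
      ((tendsto_iterate_add_of_tendsto_subseq hS.continuous hlim m).dist
        (tendsto_iterate_add_of_tendsto_subseq hS.continuous hlim (m + 1)))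
      (hL.comp ((tendsto_add_atTop_nat m).comp hφ))
  exact (step_eq m).trans (step_eq 0).symm

end Nonexpansive

section Averaged

variable {E : Type*} [NormedAddCommGroup E] [NormedSpace ℝ E] {T : E → E} {κ : ℝ} {x p : E}

/-- The averaged operator `(1 - κ) I + κ T`, whose iterates form the Krasnoselskii–Mann
iteration of `T` with constant damping factor `κ`. -/
def averagedMap (κ : ℝ) (T : E → E) (x : E) : E := (1 - κ) • x + κ • T x

theorem averagedMap_sub_self (κ : ℝ) (T : E → E) (x : E) :
    averagedMap κ T x - x = κ • (T x - x) := by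
  unfold averagedMap
  module

theorem dist_averagedMap (hκ : 0 ≤ κ) (T : E → E) (x : E) :
    dist x (averagedMap κ T x) = κ * dist x (T x) := by
  rw [dist_comm, dist_eq_norm, averagedMap_sub_self, norm_smul, Real.norm_of_nonneg hκ,
    dist_comm, dist_eq_norm]

theorem isFixedPt_averagedMap (κ : ℝ) (hp : Function.IsFixedPt T p) :
    Function.IsFixedPt (averagedMap κ T) p := by
  rw [Function.IsFixedPt, ← sub_eq_zero, averagedMap_sub_self, hp.eq, sub_self, smul_zero]

theorem mapsTo_averagedMap {C : Set E} (hC : Convex ℝ C) (hT : Set.MapsTo T C C)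
    (hκ : κ ∈ Set.Icc (0 : ℝ) 1) : Set.MapsTo (averagedMap κ T) C C := fun _ hx =>
  hC hx (hT hx) (sub_nonneg.2 hκ.2) hκ.1 (sub_add_cancel 1 κ)

theorem lipschitzWith_averagedMap (hT : LipschitzWith 1 T) (hκ : κ ∈ Set.Icc (0 : ℝ) 1) :
    LipschitzWith 1 (averagedMap κ T) := by
  refine LipschitzWith.mk_one fun x y => ?_
  have hTxy : dist (T x) (T y) ≤ dist x y := by simpa using hT.dist_le_mul x y
  calc dist (averagedMap κ T x) (averagedMap κ T y)
      ≤ dist ((1 - κ) • x) ((1 - κ) • y) + dist (κ • T x) (κ • T y) := dist_add_add_le _ _ _ _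
    _ = (1 - κ) * dist x y + κ * dist (T x) (T y) := by
        rw [dist_smul₀, dist_smul₀, Real.norm_of_nonneg hκ.1,
          Real.norm_of_nonneg (sub_nonneg.2 hκ.2)]
    _ ≤ (1 - κ) * dist x y + κ * dist x y := by gcongr; exact hκ.1
    _ = dist x y := by ring

theorem dist_iterate_averagedMap_le (hκ : 0 ≤ κ) {r : ℝ}
    (hr : ∀ n, dist ((averagedMap κ T)^[n] x) (T ((averagedMap κ T)^[n] x)) = r) (n : ℕ) :
    dist x ((averagedMap κ T)^[n] x) ≤ n * κ * r := by
  have hstep (k : ℕ) :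
      dist ((averagedMap κ T)^[k] x) ((averagedMap κ T)^[k + 1] x) ≤ κ * r := by
    rw [Function.iterate_succ_apply', dist_averagedMap hκ, hr]
  simpa [mul_assoc] using dist_le_range_sum_of_dist_le n fun {k} _ => hstep k

-- This is the Goebel–Kirk inequality, whose error term vanishes when the residual is constant.
theorem one_add_mul_mul_le_dist_iterate_averagedMap (hT : LipschitzWith 1 T)
    (hκ : κ ∈ Set.Ico (0 : ℝ) 1) {r : ℝ} (n : ℕ) (x : E)
    (hr : ∀ k, dist ((averagedMap κ T)^[k] x) (T ((averagedMap κ T)^[k] x)) = r) :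
    (1 + n * κ) * r ≤ dist x (T ((averagedMap κ T)^[n] x)) := by
  induction n generalizing x with
  | zero => simpa using (hr 0).ge
  | succ n ih =>
    have hκ' : 0 < 1 - κ := sub_pos.2 hκ.2
    set y := (averagedMap κ T)^[n + 1] x with hy
    have tail_bound : (1 + n * κ) * r ≤ dist (averagedMap κ T x) (T y) := by
      simpa only [hy, Function.iterate_succ_apply] using ih (averagedMap κ T x) fun k => hr (k + 1)
    have image_bound : dist (T x) (T y) ≤ (n + 1) * κ * r :=
      calc dist (T x) (T y) ≤ dist x y := by simpa using hT.dist_le_mul x y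
        _ ≤ (n + 1) * κ * r := by exact_mod_cast dist_iterate_averagedMap_le hκ.1 hr (n + 1)
    have split_bound : dist (averagedMap κ T x) (T y) ≤
        (1 - κ) * dist x (T y) + κ * dist (T x) (T y) :=
      (convexOn_univ_dist (T y)).2 (Set.mem_univ x) (Set.mem_univ (T x))
        hκ'.le hκ.1 (sub_add_cancel 1 κ)
    have : (1 - κ) * ((1 + (n + 1) * κ) * r) ≤ (1 - κ) * dist x (T y) := by
      linarith [mul_le_mul_of_nonneg_left image_bound hκ.1]
    exact_mod_cast le_of_mul_le_mul_left this hκ'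

theorem isFixedPt_of_residual_const_of_isBounded (hT : LipschitzWith 1 T)
    (hκ : κ ∈ Set.Ioo (0 : ℝ) 1)
    (hres : ∀ n, dist ((averagedMap κ T)^[n] p) (T ((averagedMap κ T)^[n] p)) = dist p (T p))
    (hb : Bornology.IsBounded (Set.range fun n => (averagedMap κ T)^[n] p)) :
    Function.IsFixedPt T p := by
  obtain ⟨B, hB⟩ := Metric.isBounded_iff.1 hb
  have growth (n : ℕ) : n * (κ * dist p (T p)) ≤ B := by
    have h := one_add_mul_mul_le_dist_iterate_averagedMap hT ⟨hκ.1.le, hκ.2⟩ n p hres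
    have htri := dist_triangle p ((averagedMap κ T)^[n] p) (T ((averagedMap κ T)^[n] p))
    have hdiam : dist p ((averagedMap κ T)^[n] p) ≤ B := hB ⟨0, rfl⟩ ⟨n, rfl⟩
    linarith [hres n]
  by_contra hne
  have hpos : 0 < κ * dist p (T p) := mul_pos hκ.1 (dist_pos.2 (Ne.symm hne))
  obtain ⟨n, hn⟩ := Archimedean.arch (B + 1) hpos
  rw [nsmul_eq_mul] at hn
  linarith [growth n]

theorem exists_isFixedPt_and_tendsto_iterate_averagedMap (hT : LipschitzWith 1 T)
    (hκ : κ ∈ Set.Ioo (0 : ℝ) 1) {K : Set E} (hK : IsCompact K)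
    (hx : ∀ n, (averagedMap κ T)^[n] x ∈ K) :
    ∃ p ∈ K, Function.IsFixedPt T p ∧
      Tendsto (fun n => (averagedMap κ T)^[n] x) atTop (𝓝 p) := by
  have hS : LipschitzWith 1 (averagedMap κ T) := lipschitzWith_averagedMap hT ⟨hκ.1.le, hκ.2.le⟩
  obtain ⟨p, hpK, φ, hφ, hlim⟩ := hK.tendsto_subseq hx
  have orbit_mem (m : ℕ) : (averagedMap κ T)^[m] p ∈ K :=
    hK.isClosed.mem_of_tendsto (tendsto_iterate_add_of_tendsto_subseq hS.continuous hlim m)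
      (.of_forall fun k => hx (φ k + m))
  have residual_const (m : ℕ) :
      dist ((averagedMap κ T)^[m] p) (T ((averagedMap κ T)^[m] p)) = dist p (T p) := by
    have hstep := dist_iterate_succ_eq_of_tendsto_subseq hS hφ.tendsto_atTop hlim m
    rw [Function.iterate_succ_apply', dist_averagedMap hκ.1.le, dist_averagedMap hκ.1.le] at hstep
    exact mul_left_cancel₀ hκ.1.ne' hstep
  have hp : Function.IsFixedPt T p :=
    isFixedPt_of_residual_const_of_isBounded hT hκ residual_const
      (hK.isBounded.subset (Set.range_subset_iff.2 orbit_mem))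
  exact ⟨p, hpK, hp, tendsto_iterate_of_isFixedPt_of_tendsto_subseq hS
    (isFixedPt_averagedMap κ hp) hφ.tendsto_atTop hlim⟩

theorem exists_tendsto_iterate_averagedMap_of_isFixedPt [ProperSpace E] (hT : LipschitzWith 1 T)
    (hκ : κ ∈ Set.Ioo (0 : ℝ) 1) (hp : Function.IsFixedPt T p) (x : E) :
    ∃ q, Function.IsFixedPt T q ∧
      Tendsto (fun n => (averagedMap κ T)^[n] x) atTop (𝓝 q) := by
  have hball (n : ℕ) : (averagedMap κ T)^[n] x ∈ Metric.closedBall p (dist x p) :=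
    antitone_dist_iterate_of_isFixedPt (lipschitzWith_averagedMap hT ⟨hκ.1.le, hκ.2.le⟩)
      (isFixedPt_averagedMap κ hp) x (Nat.zero_le n)
  obtain ⟨q, -, hq⟩ :=
    exists_isFixedPt_and_tendsto_iterate_averagedMap hT hκ (isCompact_closedBall p _) hball
  exact ⟨q, hq⟩

end Averaged

section Offers

variable {ι : Type*}

theorem fmax_nonneg {s : Finset ι} {f : ι → ℝ} (hf : ∀ k ∈ s, 0 ≤ f k) : 0 ≤ fmax s f :=
  Real.iSup_nonneg fun k => Real.iSup_nonneg fun hk => hf k hk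

theorem fmax_le {s : Finset ι} {f : ι → ℝ} {B : ℝ} (hB : 0 ≤ B) (hf : ∀ k ∈ s, f k ≤ B) :
    fmax s f ≤ B :=
  Real.iSup_le (fun k => Real.iSup_le (fun hk => hf k hk) hB) hB

theorem lipschitzWith_fmax [Fintype ι] (s : Finset ι) : LipschitzWith 1 (fmax s) := by
  refine LipschitzWith.of_le_add fun f g => ?_
  rcases isEmpty_or_nonempty ι with hι | hι
  · simp [fmax]
  refine ciSup_le fun k => ?_
  have hk : ⨆ _ : k ∈ s, f k ≤ (⨆ _ : k ∈ s, g k) + dist f g := by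
    by_cases hks : k ∈ s
    · have hfg := (abs_le.1 ((Real.dist_eq _ _).ge.trans (dist_le_pi_dist f g k))).2
      simp only [hks, ciSup_unique]
      linarith
    · simp [hks]
  exact hk.trans (add_le_add_left
    (le_ciSup (f := fun k => ⨆ _ : k ∈ s, g k) (Set.finite_range _).bddAbove k) _)

theorem offer_nonneg (w : ι → ι → ℝ) {α : ι → ι → ℝ} {i j : ι} (hji : 0 ≤ α j i) :
    0 ≤ offer w α i j := by
  unfold offer pos
  rcases max_cases (w i j - α i j) 0 with h | h <;>
  rcases max_cases (w i j - α i j - α j i) 0 with h' | h' <;> linarith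

theorem offer_le_pos (w : ι → ι → ℝ) {α : ι → ι → ℝ} {i j : ι} (hij : 0 ≤ α i j) :
    offer w α i j ≤ pos (w i j) := by
  unfold offer pos
  have hmono : max (w i j - α i j) 0 ≤ max (w i j) 0 := max_le_max_right 0 (by linarith)
  linarith [le_max_right (w i j - α i j - α j i) 0]

theorem pos_sub_half_pos_le_add {w a b a' b' d : ℝ} (ha : |a - a'| ≤ d) (hb : |b - b'| ≤ d) :
    pos (w - a) - 1 / 2 * pos (w - a - b) ≤ pos (w - a') - 1 / 2 * pos (w - a' - b') + d := by
  unfold pos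
  rw [abs_le] at ha hb
  rcases max_cases (w - a) 0 with h₁ | h₁ <;> rcases max_cases (w - a - b) 0 with h₂ | h₂ <;>
  rcases max_cases (w - a') 0 with h₃ | h₃ <;> rcases max_cases (w - a' - b') 0 with h₄ | h₄ <;>
  linarith

theorem lipschitzWith_offer [Fintype ι] (w : ι → ι → ℝ) (i j : ι) :
    LipschitzWith 1 fun α => offer w α i j := by
  refine LipschitzWith.of_le_add fun α β => pos_sub_half_pos_le_add ?_ ?_
  · exact (dist_le_pi_dist (α i) (β i) j).trans (dist_le_pi_dist α β i)
  · exact (dist_le_pi_dist (α j) (β j) i).trans (dist_le_pi_dist α β j)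

end Offers

section Network

variable (G : SimpleGraph V) [DecidableRel G.Adj] (w : V → V → ℝ)

theorem lipschitzWith_upd : LipschitzWith 1 (upd G w) := by
  refine LipschitzWith.of_edist_le fun α β =>
    edist_pi_le_iff.2 fun i => edist_pi_le_iff.2 fun j => ?_
  have hoffers : edist (fun k => offer w α k i) (fun k => offer w β k i) ≤ edist α β :=
    edist_pi_le_iff.2 fun k => by simpa using lipschitzWith_offer w k i α β
  calc edist (upd G w α i j) (upd G w β i j)
      ≤ edist (fun k => offer w α k i) (fun k => offer w β k i) := by
        simpa [upd] using lipschitzWith_fmax ((G.neighborFinset i).erase j)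
          (fun k => offer w α k i) (fun k => offer w β k i)
    _ ≤ edist α β := hoffers

theorem upd_mem_Icc {α : V → V → ℝ} (hα : 0 ≤ α) :
    upd G w α ∈ Set.Icc 0 fun _ _ => ‖w‖ := by
  refine ⟨fun i j => fmax_nonneg fun k _ => offer_nonneg w (hα i k), fun i j =>
    fmax_le (norm_nonneg w) fun k _ => (offer_le_pos w (hα k i)).trans (max_le ?_ (norm_nonneg w))⟩
  exact (le_abs_self _).trans ((norm_le_pi_norm (w k) i).trans (norm_le_pi_norm w k))

theorem dyn_eq_iterate_averagedMap (κ : ℝ) (α0 : V → V → ℝ) (t : ℕ) :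
    dyn G w κ α0 t = (averagedMap κ (upd G w))^[t] α0 := by
  induction t with
  | zero => rfl
  | succ t ih =>
    rw [Function.iterate_succ_apply', ← ih]
    rfl

theorem exists_nonneg_isFixedPt_upd :
    ∃ α : V → V → ℝ, 0 ≤ α ∧ Function.IsFixedPt (upd G w) α := by
  have hbox : Set.MapsTo (averagedMap (1 / 2) (upd G w)) (Set.Icc 0 fun _ _ => ‖w‖)
      (Set.Icc 0 fun _ _ => ‖w‖) :=
    mapsTo_averagedMap (convex_Icc _ _) (fun α hα => upd_mem_Icc G w hα.1) (by norm_num)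
  have h0 : (0 : V → V → ℝ) ∈ Set.Icc (0 : V → V → ℝ) fun _ _ => ‖w‖ :=
    ⟨le_rfl, fun _ _ => norm_nonneg w⟩
  obtain ⟨α, hα, hfix, -⟩ := exists_isFixedPt_and_tendsto_iterate_averagedMap
    (lipschitzWith_upd G w) (by norm_num) isCompact_Icc fun n => hbox.iterate n h0
  exact ⟨α, hα.1, hfix⟩

theorem exists_isFixedPt_upd_and_tendsto_dyn {κ : ℝ} (hκ : κ ∈ Set.Ioo (0 : ℝ) 1)
    (α0 : V → V → ℝ) :
    ∃ αs, Function.IsFixedPt (upd G w) αs ∧ Tendsto (dyn G w κ α0) atTop (𝓝 αs) := by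
  obtain ⟨β, -, hβ⟩ := exists_nonneg_isFixedPt_upd G w
  obtain ⟨αs, hfix, hlim⟩ :=
    exists_tendsto_iterate_averagedMap_of_isFixedPt (lipschitzWith_upd G w) hκ hβ α0
  exact ⟨αs, hfix, hlim.congr fun t => (dyn_eq_iterate_averagedMap G w κ α0 t).symm⟩

end Network

theorem exists_fixedPt_and_convergence_general
    (G : SimpleGraph V) [DecidableRel G.Adj] (w : V → V → ℝ)
    {κ : ℝ} (hκ : κ ∈ Set.Ioo (0 : ℝ) 1) :
    (∃ α : V → V → ℝ, ValidMsg G α ∧ IsFixedPt G w α) ∧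
      ∀ α0 : V → V → ℝ, ∃ αs : V → V → ℝ, IsFixedPt G w αs ∧
        ∀ i j, Tendsto (fun t => dyn G w κ α0 t i j) atTop (𝓝 (αs i j)) := by
  constructor
  · obtain ⟨α, hα, hfix⟩ := exists_nonneg_isFixedPt_upd G w
    exact ⟨α, fun i j _ => hα i j, fun i j _ => congr_fun₂ hfix i j⟩
  · intro α0
    obtain ⟨αs, hfix, hlim⟩ := exists_isFixedPt_upd_and_tendsto_dyn G w hκ α0
    exact ⟨αs, fun i j _ => congr_fun₂ hfix i j,
      fun i j => tendsto_pi_nhds.1 (tendsto_pi_nhds.1 hlim i) j⟩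

/-- The natural dynamics has at least one fixed point, and from any
initial condition in `[0,W]^{2|E|}` the iterates converge to a fixed point of `T`. -/
theorem exists_fixedPt_and_convergence
    {V : Type*} [Fintype V] [DecidableEq V] (G : SimpleGraph V) [DecidableRel G.Adj]
    (w : V → V → ℝ) (hw : GoodW G w) (W : ℝ)
    (hwW : ∀ i j, G.Adj i j → w i j ≤ W)
    (κ : ℝ) (hκ : κ ∈ Set.Ioo (0 : ℝ) 1) :
    (∃ α : V → V → ℝ, ValidMsg G α ∧ IsFixedPt G w α) ∧
      ∀ α0 : V → V → ℝ, (∀ i j, G.Adj i j → α0 i j ∈ Set.Icc (0 : ℝ) W) →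
        ∃ αs : V → V → ℝ, IsFixedPt G w αs ∧
          ∀ i j, Filter.Tendsto (fun t => dyn G w κ α0 t i j) Filter.atTop
            (nhds (αs i j)) := by
  obtain ⟨hexists, hconverges⟩ := exists_fixedPt_and_convergence_general G w hκ
  exact ⟨hexists, fun α0 _ => hconverges α0⟩

end EN
end

section
/- For any exchange network G, if α is a fixed point of the natural dynamics update operator with earnings vector γ, then the balance property holds at every edge: for all (i,j)∈E, γ_i − max_{k∈∂i∖j}(w_{ik}−γ_k)_+ = γ_j − max_{l∈∂j∖i}(w_{jl}−γ_l)_+, and both sides of this equation are nonnegative. -/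
namespace EN

open Finset

variable {V : Type*}

variable [Fintype V] [DecidableEq V]

/-! At a fixed point the message `α_{i∖j}` is the best offer `i` receives from anyone but `j`.
With `s = (w_{ij} - α_{i∖j} - α_{j∖i})₊`, the offer of `j` therefore brings the earnings of `i` to
exactly `γ_i = α_{i∖j} + r_{ij} s`. Substituting this formula for `γ_k` gives
`m_{k→i} = (w_{ik} - γ_k)₊` at every neighbor `k`, so `α_{i∖j}` is also the best alternative of `i`
to `j`, and what `i` earns above it is its share `r_{ij} s` of a quantity `s` symmetric in `i` and
`j`. The equal division of the natural dynamics is the case `r_{ij} = 1/2`. -/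

section FiniteMaximum

variable {ι : Type*} {s : Finset ι} {f g : ι → ℝ} {i k : ι}

/-- The `0` comes from the `k ∉ s`, for which the inner supremum in `fmax` is over an empty type. -/
theorem isLUB_fmax (hi : i ∉ s) : IsLUB (insert 0 (f '' s)) (fmax s f) := by
  have range_eq : Set.range (fun k => ⨆ _ : k ∈ s, f k) = insert 0 (f '' s) := by
    ext x
    constructor
    · rintro ⟨k, rfl⟩
      by_cases hk : k ∈ s
      · exact Or.inr ⟨k, hk, by simp only [hk, ciSup_unique]⟩
      · exact Or.inl (by simp only [hk, Real.iSup_of_isEmpty])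
    · rintro (rfl | ⟨k, hk, rfl⟩)
      · exact ⟨i, by simp only [hi, Real.iSup_of_isEmpty]⟩
      · exact ⟨k, by simp only [mem_coe.1 hk, ciSup_unique]⟩
  have bdd : BddAbove (insert 0 (f '' s)) := ((s.finite_toSet.image f).insert 0).bddAbove
  have : Nonempty ι := ⟨i⟩
  rw [← range_eq] at bdd ⊢
  exact isLUB_ciSup bdd

theorem fmax_nonneg_s8 (hi : i ∉ s) : 0 ≤ fmax s f :=
  (isLUB_fmax hi).1 (Set.mem_insert _ _)

theorem fmax_insert [DecidableEq ι] (hi : i ∉ insert k s) :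
    fmax (insert k s) f = max (f k) (fmax s f) := by
  have lub_insert := isLUB_fmax (f := f) hi
  rw [coe_insert, Set.image_insert_eq, Set.insert_comm] at lub_insert
  exact lub_insert.unique ((isLUB_fmax fun h => hi (mem_insert_of_mem h)).insert (f k))

theorem fmax_congr (h : ∀ k ∈ s, f k = g k) : fmax s f = fmax s g :=
  iSup_congr fun k => iSup_congr (h k)

end FiniteMaximum

section PositivePart

variable {a r x : ℝ}

theorem pos_nonneg (x : ℝ) : 0 ≤ pos x :=
  le_max_right x 0

theorem pos_of_nonneg (hx : 0 ≤ x) : pos x = x :=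
  max_eq_left hx

theorem pos_of_nonpos (hx : x ≤ 0) : pos x = 0 :=
  max_eq_right hx

theorem max_pos_sub_mul_pos_sub (ha : 0 ≤ a) (hr : 0 ≤ r) :
    max (pos x - (1 - r) * pos (x - a)) a = a + r * pos (x - a) := by
  rcases le_total a x with hax | hxa
  · have share_nonneg : 0 ≤ r * (x - a) := mul_nonneg hr (sub_nonneg.2 hax)
    rw [pos_of_nonneg (ha.trans hax), pos_of_nonneg (sub_nonneg.2 hax), max_eq_left] <;> linarith
  · rw [pos_of_nonpos (sub_nonpos.2 hxa), mul_zero, mul_zero, sub_zero, add_zero]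
    exact max_eq_right (max_le hxa ha)

theorem pos_sub_mul_pos_sub (ha : 0 ≤ a) (hr : r ≤ 1) :
    pos (x - r * pos (x - a)) = pos x - r * pos (x - a) := by
  rcases le_total a x with hax | hxa
  · have share_le : r * (x - a) ≤ x - a := mul_le_of_le_one_left (sub_nonneg.2 hax) hr
    rw [pos_of_nonneg (ha.trans hax), pos_of_nonneg (sub_nonneg.2 hax)]
    exact pos_of_nonneg (by linarith)
  · rw [pos_of_nonpos (sub_nonpos.2 hxa), mul_zero, sub_zero, sub_zero]

end PositivePart

section FixedPoint

variable {G : SimpleGraph V} [DecidableRel G.Adj] {w r α : V → V → ℝ} {i j : V}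

theorem earnUD_eq_max_updUD (hij : G.Adj i j) :
    earnUD G w r α i = max (offerUD w r α j i) (updUD G w r α i j) := by
  have hj : j ∈ G.neighborFinset i := (G.mem_neighborFinset i j).2 hij
  have hi : i ∉ insert j ((G.neighborFinset i).erase j) := by
    rw [insert_erase hj]
    exact G.notMem_neighborFinset_self i
  simpa only [earnUD, updUD, insert_erase hj] using fmax_insert (f := fun k => offerUD w r α k i) hi

theorem IsFixedPtUD.nonneg (hfp : IsFixedPtUD G w r α) (hij : G.Adj i j) : 0 ≤ α i j :=
  hfp i j hij ▸ fmax_nonneg_s8 (notMem_erase j _)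

theorem IsFixedPtUD.earnUD_eq (hfp : IsFixedPtUD G w r α) (hw : ∀ i j, w i j = w j i)
    (hr : GoodR G r) (hij : G.Adj i j) :
    earnUD G w r α i = α i j + r i j * pos (w i j - α i j - α j i) := by
  obtain ⟨r_pos, -, r_add⟩ := hr i j hij
  rw [earnUD_eq_max_updUD hij, hfp i j hij, offerUD, hw j i, eq_sub_of_add_eq' r_add,
    max_pos_sub_mul_pos_sub (hfp.nonneg hij) r_pos.le, sub_right_comm]

theorem IsFixedPtUD.offerUD_eq (hfp : IsFixedPtUD G w r α) (hw : ∀ i j, w i j = w j i)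
    (hr : GoodR G r) (hij : G.Adj i j) :
    offerUD w r α i j = pos (w i j - earnUD G w r α i) := by
  rw [hfp.earnUD_eq hw hr hij, ← sub_sub,
    pos_sub_mul_pos_sub (hfp.nonneg hij.symm) (hr i j hij).2.1.le, offerUD]

theorem IsFixedPtUD.bestAlt_earnUD (hfp : IsFixedPtUD G w r α) (hw : ∀ i j, w i j = w j i)
    (hr : GoodR G r) (hij : G.Adj i j) : bestAlt G w (earnUD G w r α) i j = α i j := by
  rw [← hfp i j hij]
  refine fmax_congr fun k hk => ?_
  have hik : G.Adj i k := (G.mem_neighborFinset i k).1 (mem_of_mem_erase hk)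
  rw [hfp.offerUD_eq hw hr hik.symm, hw i k]

theorem IsFixedPtUD.earnUD_sub_bestAlt (hfp : IsFixedPtUD G w r α) (hw : ∀ i j, w i j = w j i)
    (hr : GoodR G r) (hij : G.Adj i j) :
    earnUD G w r α i - bestAlt G w (earnUD G w r α) i j =
      r i j * pos (w i j - α i j - α j i) := by
  rw [hfp.bestAlt_earnUD hw hr hij, hfp.earnUD_eq hw hr hij, add_sub_cancel_left]

theorem fixedPoint_balance_everywhere_general (hw : ∀ i j, w i j = w j i) (hr : GoodR G r)
    (hfp : IsFixedPtUD G w r α) :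
    CorrectDiv G w r G.Adj (earnUD G w r α) ∧
      ∀ i j, G.Adj i j → 0 ≤ earnUD G w r α i - bestAlt G w (earnUD G w r α) i j := by
  refine ⟨fun i j hij => ?_, fun i j hij => ?_⟩
  · have hrij : r i j ≠ 0 := (hr i j hij).1.ne'
    have hrji : r j i ≠ 0 := (hr j i hij.symm).1.ne'
    rw [hfp.earnUD_sub_bestAlt hw hr hij, hfp.earnUD_sub_bestAlt hw hr hij.symm, one_div, one_div,
      inv_mul_cancel_left₀ hrij, inv_mul_cancel_left₀ hrji, hw j i, sub_right_comm]
  · rw [hfp.earnUD_sub_bestAlt hw hr hij]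
    exact mul_nonneg (hr i j hij).1.le (pos_nonneg _)

end FixedPoint

/-- At any fixed point of the natural dynamics, the balance property
holds at every edge, with both sides nonnegative. -/
theorem fixedPoint_balance_everywhere
    {V : Type*} [Fintype V] [DecidableEq V] (G : SimpleGraph V) [DecidableRel G.Adj]
    (w : V → V → ℝ) (hw : GoodW G w)
    (α : V → V → ℝ) (hval : ValidMsg G α) (hfp : IsFixedPt G w α) :
    ∀ i j, G.Adj i j →
      earn G w α i - bestAlt G w (earn G w α) i j =
        earn G w α j - bestAlt G w (earn G w α) j i ∧
      0 ≤ earn G w α i - bestAlt G w (earn G w α) i j ∧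
      0 ≤ earn G w α j - bestAlt G w (earn G w α) j i := by
  intro i j hij
  obtain ⟨division, surplus_nonneg⟩ := fixedPoint_balance_everywhere_general
    (r := fun _ _ => 1 / 2) hw.1 (fun _ _ _ => by norm_num) hfp
  exact ⟨mul_left_cancel₀ (by norm_num) (division i j hij), surplus_nonneg i j hij,
    surplus_nonneg j i hij.symm⟩

end EN
end
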